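/- Let n ∈ {2, 3}. There exists a constant C > 0 such that for every v ∈ C_c^∞(ℝⁿ) and every r > 0, r^{(n−1)/2} ‖v(rω)‖_{L⁴(S^{n−1}, dS_ω)} ≤ C ‖∇v‖_{L²(ℝⁿ)}^{1/2} (Σ_{|α| ≤ 1} ‖Ω^α v‖_{L²(ℝⁿ)})^{1/2}, where for n = 2, Ω^α ranges over the identity and Ω_{12}, and for n = 3, Ω^α = Ω_{12}^{α₁}Ω_{13}^{α₂}Ω_{23}^{α₃} ranges over compositions of the rotation fields of total order at most 1. -/

import Mathlib

/-!
Write `n = d + 1` and `X_r = r^d (∫_{S^d} v(rω)⁴ dω)^{1/2}`. Integrating the radial derivative of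
`v⁴` gives `v(rω)⁴ ≤ ∫_r^∞ 4 |v|³ |∇v| (ρω) dρ`. On each sphere, Cauchy–Schwarz, the embedding
`W^{1,1}(S^d) ⊂ L²(S^d)` (valid for `d ≤ 2`) applied to `v³`, and Cauchy–Schwarz again bound the
`L¹` norm of `|v|³ |∇v|` by `‖v²‖ ‖∇v‖ ∑ ‖Ω^α v‖`, with norms in `L²(S^d)`. Since
`r^{2d} ≤ ρ^{2d}` for `ρ ≥ r`, one more Cauchy–Schwarz in `ρ` yields
`X_r² ≤ A sup_ρ X_ρ` with `A` a multiple of `‖∇v‖_{L²(ℝⁿ)} ∑ ‖Ω^α v‖_{L²(ℝⁿ)}`. The supremum is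
finite because `v` has compact support, so it can be absorbed: `X_r ≤ A`.

For the spherical embedding, `w` restricted to `S^d` is extended to be homogeneous of degree `0`.
Comparing polar coordinates with slicing by hyperplanes reduces sphere integrals to integrals over
the faces of the cube `[-1, 1]^{d+1}`. On a face, the fundamental theorem of calculus bounds a
function by its integrals along each grid line, as in the Gagliardo–Nirenberg inequality.
Derivatives of the extension are tangential, hence combinations of the rotation fields.
-/

open MeasureTheory Real ENNReal FourierTransform
open scoped ContDiff

noncomputable section

/-- Euclidean space ℝⁿ. -/
abbrev Spc (n : ℕ) := EuclideanSpace ℝ (Fin n)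

/-- Space-time ℝ × ℝⁿ. -/
abbrev STn (n : ℕ) := ℝ × Spc n

variable {n : ℕ}

/-- Directional derivative in the space-time direction `v`. -/
def dirD (v : STn n) (f : STn n → ℝ) : STn n → ℝ := fun p => fderiv ℝ f p v

/-- Time derivative ∂_t. -/
def dtD : (STn n → ℝ) → STn n → ℝ := dirD (1, 0)

/-- Spatial derivative ∂_j. -/
def dxD (j : Fin n) : (STn n → ℝ) → STn n → ℝ := dirD (0, EuclideanSpace.single j 1)

/-- Spatial Laplacian. -/
def lapD (f : STn n → ℝ) : STn n → ℝ := fun p => ∑ j, dxD j (dxD j f) p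

/-- d'Alembertian □ = ∂_t² − Δ. -/
def boxD (f : STn n → ℝ) : STn n → ℝ := fun p => dtD (dtD f) p - lapD f p

/-- Lorentz boost L_j = t ∂_j + x_j ∂_t. -/
def LD (j : Fin n) (f : STn n → ℝ) : STn n → ℝ := fun p => p.1 * dxD j f p + p.2 j * dtD f p

/-- Rotation Ω_{jk} = x_j ∂_k − x_k ∂_j. -/
def RotD (j k : Fin n) (f : STn n → ℝ) : STn n → ℝ := fun p => p.2 j * dxD k f p - p.2 k * dxD j f p

/-- Scaling S = t ∂_t + x·∇. -/
def SD (f : STn n → ℝ) : STn n → ℝ := fun p => p.1 * dtD f p + ∑ j, p.2 j * dxD j f p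

/-- Index type for the Klainerman vector fields. -/
def GIdx (n : ℕ) := Option (Fin n) ⊕ Fin n ⊕ (Fin n × Fin n) ⊕ Unit

instance : Fintype (GIdx n) := by unfold GIdx; infer_instance
instance : DecidableEq (GIdx n) := by unfold GIdx; infer_instance

/-- The Klainerman vector field with index `i`. -/
def Gop : GIdx n → (STn n → ℝ) → STn n → ℝ
  | Sum.inl none => dtD
  | Sum.inl (some j) => dxD j
  | Sum.inr (Sum.inl j) => LD j
  | Sum.inr (Sum.inr (Sum.inl jk)) => RotD jk.1 jk.2
  | Sum.inr (Sum.inr (Sum.inr _)) => SD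

/-- Iterated composition Γ^α along a word of indices. -/
def GwL : List (GIdx n) → (STn n → ℝ) → STn n → ℝ
  | [], f => f
  | a :: l, f => Gop a (GwL l f)

/-- Sum of a quantity over all products of at most `N` Klainerman vector fields. -/
def SumW (N : ℕ) (Φ : (STn n → ℝ) → ℝ≥0∞) (f : STn n → ℝ) : ℝ≥0∞ :=
  ∑ m ∈ Finset.range (N + 1), ∑ w : Fin m → GIdx n, Φ (GwL (List.ofFn w) f)

/-- Pointwise norm of the full space-time gradient ∂u = (∂_t u, ∇_x u). -/
def gradN (f : STn n → ℝ) (p : STn n) : ℝ := Real.sqrt ((dtD f p) ^ 2 + ∑ j, (dxD j f p) ^ 2)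

/-- Fourier transform (in space) of a real valued function. -/
def fourierS (g : Spc n → ℝ) : Spc n → ℂ := 𝓕 (fun x => (g x : ℂ))

/-- ‖ |D|^s g ‖_{L²}, i.e. the L² norm of ξ ↦ |ξ|^s (ℱ g)(ξ). -/
def DsN (s : ℝ) (g : Spc n → ℝ) : ℝ≥0∞ :=
  eLpNorm (fun ξ : Spc n => ‖ξ‖ ^ s * ‖fourierS g ξ‖) 2 volume

/-- The surface measure on the unit sphere of ℝⁿ. -/
def sphM (n : ℕ) : Measure (Metric.sphere (0 : Spc n) 1) := (volume : Measure (Spc n)).toSphere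

/-- The L^q norm of g(r ω) over the unit sphere. -/
def sphN (n : ℕ) (q : ℝ) (g : Spc n → ℝ) (r : ℝ) : ℝ≥0∞ :=
  (∫⁻ o, (‖g (r • (o : Spc n))‖₊ : ℝ≥0∞) ^ q ∂(sphM n)) ^ (1 / q)

/-- The mixed norm ‖g‖_{p,q} = (∫_0^∞ ‖g(r·)‖_{L^q(S^{n-1})}^p r^{n-1} dr)^{1/p}. -/
def mixN (n : ℕ) (p q : ℝ) (g : Spc n → ℝ) : ℝ≥0∞ :=
  (∫⁻ r in Set.Ioi (0 : ℝ), (sphN n q g r) ^ p * ENNReal.ofReal (r ^ (n - 1))) ^ (1 / p)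

/-- A space-time function which is Schwartz in the space variable for each fixed time. -/
def SchwartzInX (v : STn n → ℝ) : Prop :=
  ∀ t : ℝ, ∃ φ : SchwartzMap (Spc n) ℝ, ∀ x, v (t, x) = φ x

/-- The space-time partial derivatives ∂_0 = ∂_t, ∂_j (j = 1,2,3) on ℝ × ℝ³. -/
def pd4 (α : Fin 4) : (STn 3 → ℝ) → STn 3 → ℝ := Fin.cases dtD (fun j => dxD j) α

/-- The null condition for a set of coefficients {A^{αβ}}. -/
def NullCond (A : Fin 4 → Fin 4 → ℝ) : Prop :=
  ∀ X : Fin 4 → ℝ, (X 0) ^ 2 = (X 1) ^ 2 + (X 2) ^ 2 + (X 3) ^ 2 →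
    ∑ α, ∑ β, A α β * X α * X β = 0

/-- The null form A^{αβ} (∂_α v)(∂_β w). -/
def QF (A : Fin 4 → Fin 4 → ℝ) (v w : STn 3 → ℝ) (p : STn 3) : ℝ :=
  ∑ α, ∑ β, A α β * pd4 α v p * pd4 β w p

/-- The good derivative T_j = ∂_j + (x_j/|x|) ∂_t. -/
def TD (j : Fin 3) (f : STn 3 → ℝ) (p : STn 3) : ℝ := dxD j f p + (p.2 j / ‖p.2‖) * dtD f p

end

open scoped Pointwise

section BoxSobolev

variable {F : Type*} [NormedAddCommGroup F] [NormedSpace ℝ F] [CompleteSpace F]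

lemma enorm_sub_le_lintegral_enorm_deriv {u u' : ℝ → F}
    (hu : ∀ s, HasDerivAt u (u' s) s) (hu' : Continuous u') (a b : ℝ) :
    ‖u b - u a‖ₑ ≤ ∫⁻ s in Set.uIoc a b, ‖u' s‖ₑ := by
  rw [← intervalIntegral.integral_eq_sub_of_hasDerivAt (fun s _ => hu s)
    (hu'.intervalIntegrable a b), ← ofReal_norm, intervalIntegral.norm_intervalIntegral_eq,
    ofReal_norm]
  exact enorm_integral_le_lintegral_enorm _

lemma enorm_le_lintegral_Icc_enorm_add_enorm_deriv {u u' : ℝ → F}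
    (hu : ∀ s, HasDerivAt u (u' s) s) (hu' : Continuous u') {a b x : ℝ} (hab : a + 1 ≤ b)
    (hx : x ∈ Set.Icc a b) :
    ‖u x‖ₑ ≤ ∫⁻ s in Set.Icc a b, (‖u s‖ₑ + ‖u' s‖ₑ) := by
  have huc : Continuous u := continuous_iff_continuousAt.2 fun s => (hu s).continuousAt
  have hsub : Set.Icc a (a + 1) ⊆ Set.Icc a b := Set.Icc_subset_Icc_right hab
  have hpoint : ∀ s ∈ Set.Icc a b, ‖u x‖ₑ ≤ ‖u s‖ₑ + ∫⁻ t in Set.Icc a b, ‖u' t‖ₑ :=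
    fun s hs => calc
      ‖u x‖ₑ = ‖u s + (u x - u s)‖ₑ := by rw [add_sub_cancel]
      _ ≤ ‖u s‖ₑ + ‖u x - u s‖ₑ := enorm_add_le _ _
      _ ≤ ‖u s‖ₑ + ∫⁻ t in Set.Icc a b, ‖u' t‖ₑ := by
        gcongr
        refine (enorm_sub_le_lintegral_enorm_deriv hu hu' s x).trans (lintegral_mono_set ?_)
        exact Set.uIoc_subset_uIcc.trans (Set.uIcc_subset_Icc hs hx)
  calc ‖u x‖ₑ = ∫⁻ _ in Set.Icc a (a + 1), ‖u x‖ₑ := by simp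
    _ ≤ ∫⁻ s in Set.Icc a (a + 1), (‖u s‖ₑ + ∫⁻ t in Set.Icc a b, ‖u' t‖ₑ) :=
        setLIntegral_mono' measurableSet_Icc fun s hs => hpoint s (hsub hs)
    _ = (∫⁻ s in Set.Icc a (a + 1), ‖u s‖ₑ) + ∫⁻ t in Set.Icc a b, ‖u' t‖ₑ := by
        rw [lintegral_add_left huc.enorm.measurable]; simp
    _ ≤ (∫⁻ s in Set.Icc a b, ‖u s‖ₑ) + ∫⁻ t in Set.Icc a b, ‖u' t‖ₑ := by
        gcongr
    _ = ∫⁻ s in Set.Icc a b, (‖u s‖ₑ + ‖u' s‖ₑ) :=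
        (lintegral_add_left huc.enorm.measurable _).symm

variable {ι : Type*} [Fintype ι]

lemma volume_restrict_Icc_pi (a b : ι → ℝ) :
    (volume : Measure (ι → ℝ)).restrict (Set.Icc a b) =
      Measure.pi fun i => (volume : Measure ℝ).restrict (Set.Icc (a i) (b i)) := by
  rw [← Set.pi_univ_Icc, volume_pi, Measure.restrict_pi_pi]

variable [DecidableEq ι]

lemma enorm_le_lintegral_update {u : (ι → ℝ) → F} (hu : ContDiff ℝ 1 u)
    {g : (ι → ℝ) → ℝ≥0∞} (hug : ∀ y i, ‖fderiv ℝ u y (Pi.single i 1)‖ₑ ≤ g y)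
    {a b : ι → ℝ} (hab : ∀ i, a i + 1 ≤ b i) {y : ι → ℝ} (hy : y ∈ Set.Icc a b) (i : ι) :
    ‖u y‖ₑ ≤ ∫⁻ s in Set.Icc (a i) (b i),
      (‖u (Function.update y i s)‖ₑ + g (Function.update y i s)) := by
  have hderiv (s : ℝ) : HasDerivAt (fun s => u (Function.update y i s))
      (fderiv ℝ u (Function.update y i s) (Pi.single i 1)) s :=
    (hu.differentiable one_ne_zero _).hasFDerivAt.comp_hasDerivAt s (hasDerivAt_update y i s)
  have hcont : Continuous fun s => fderiv ℝ u (Function.update y i s) (Pi.single i 1) :=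
    ((hu.continuous_fderiv one_ne_zero).comp
      (continuous_const.update i continuous_id)).clm_apply continuous_const
  calc ‖u y‖ₑ = ‖u (Function.update y i (y i))‖ₑ := by rw [Function.update_eq_self]
    _ ≤ ∫⁻ s in Set.Icc (a i) (b i), (‖u (Function.update y i s)‖ₑ +
          ‖fderiv ℝ u (Function.update y i s) (Pi.single i 1)‖ₑ) :=
        enorm_le_lintegral_Icc_enorm_add_enorm_deriv hderiv hcont (hab i) ⟨hy.1 i, hy.2 i⟩
    _ ≤ _ := by
        gcongr with s
        exact hug _ i

theorem lintegral_Icc_enorm_rpow_le {u : (ι → ℝ) → F} (hu : ContDiff ℝ 1 u)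
    {g : (ι → ℝ) → ℝ≥0∞} (hg : Measurable g)
    (hug : ∀ y i, ‖fderiv ℝ u y (Pi.single i 1)‖ₑ ≤ g y)
    {a b : ι → ℝ} (hab : ∀ i, a i + 1 ≤ b i) {p : ℝ} (hp₀ : 0 ≤ p)
    (hp : (Fintype.card ι - 1 : ℝ) * p ≤ 1) :
    ∫⁻ y in Set.Icc a b, ‖u y‖ₑ ^ (1 + p) ≤ (∫⁻ y in Set.Icc a b, (‖u y‖ₑ + g y)) ^ (1 + p) := by
  set f : (ι → ℝ) → ℝ≥0∞ := fun y => ‖u y‖ₑ + g y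
  set q : ℝ := 1 - (Fintype.card ι - 1 : ℝ) * p
  have hq : 0 ≤ q := sub_nonneg.2 hp
  have hpoint : ∀ y ∈ Set.Icc a b, ‖u y‖ₑ ^ (1 + p) ≤
      f y ^ q * ∏ i, (∫⁻ s in Set.Icc (a i) (b i), f (Function.update y i s)) ^ p := fun y hy =>
    calc ‖u y‖ₑ ^ (1 + p) = ‖u y‖ₑ ^ (q + p * Fintype.card ι) := by congr 1; ring
      _ = ‖u y‖ₑ ^ q * ∏ _ : ι, ‖u y‖ₑ ^ p := by
        rw [ENNReal.rpow_add_of_nonneg _ _ hq (by positivity), ENNReal.rpow_mul,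
          ENNReal.rpow_natCast, Finset.prod_const, Finset.card_univ]
      _ ≤ _ := by
        gcongr with i
        · exact le_self_add
        · exact enorm_le_lintegral_update hu hug hab hy i
  refine (setLIntegral_mono' measurableSet_Icc hpoint).trans ?_
  rw [volume_restrict_Icc_pi]
  exact lintegral_mul_prod_lintegral_pow_le _ hp₀ hp (hu.continuous.enorm.measurable.add hg)

end BoxSobolev

section Polar

variable {E : Type*} [NormedAddCommGroup E] [NormedSpace ℝ E] [FiniteDimensional ℝ E]
  [MeasurableSpace E] [BorelSpace E] (μ : Measure E) [μ.IsAddHaarMeasure]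

lemma lintegral_eq_lintegral_polar [Nontrivial E] {f : E → ℝ≥0∞} (hf : Measurable f) :
    ∫⁻ x, f x ∂μ = ∫⁻ r : Set.Ioi (0 : ℝ), ∫⁻ o, f ((r : ℝ) • (o : E)) ∂μ.toSphere
      ∂(Measure.volumeIoiPow (Module.finrank ℝ E - 1)) := by
  calc ∫⁻ x, f x ∂μ = ∫⁻ x : ({0}ᶜ : Set E), f x ∂(μ.comap (↑)) := by
        rw [lintegral_subtype_comap (measurableSet_singleton _).compl, restrict_compl_singleton]
    _ = ∫⁻ q, f ((q.2 : ℝ) • (q.1 : E))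
          ∂(μ.toSphere.prod (.volumeIoiPow (Module.finrank ℝ E - 1))) := by
        rw [← μ.measurePreserving_homeomorphUnitSphereProd.lintegral_comp_emb
          (Homeomorph.measurableEmbedding _)]
        refine lintegral_congr fun x => ?_
        rw [← homeomorphUnitSphereProd_symm_apply_coe, Homeomorph.symm_apply_apply]
    _ = _ := lintegral_prod_symm _ (hf.comp (by fun_prop)).aemeasurable

lemma lintegral_toSphere_eq {H : E → ℝ≥0∞} (hH : Measurable H)
    (hhom : ∀ t : ℝ, 0 < t → ∀ x, H (t • x) = H x) :
    ∫⁻ o : Metric.sphere (0 : E) 1, H o ∂μ.toSphere =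
      Module.finrank ℝ E * ∫⁻ x in Metric.ball 0 1, H x ∂μ := by
  rcases subsingleton_or_nontrivial E with hE | hE
  · simp [(Measure.toSphere_eq_zero_iff μ).2 hE, Module.finrank_zero_of_subsingleton]
  let one : Set.Ioi (0 : ℝ) := ⟨1, Set.mem_Ioi.2 one_pos⟩
  have hmass : (Module.finrank ℝ E : ℝ≥0∞) *
      Measure.volumeIoiPow (Module.finrank ℝ E - 1) (Set.Iio one) = 1 := by
    have hpos : 0 < (Module.finrank ℝ E : ℝ) := by exact_mod_cast Module.finrank_pos
    rw [Measure.volumeIoiPow_apply_Iio, ← ENNReal.ofReal_natCast, ← ENNReal.ofReal_mul hpos.le,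
      Nat.cast_pred Module.finrank_pos]
    simp [one, hpos.ne']
  have hpolar (r : Set.Ioi (0 : ℝ)) (o : Metric.sphere (0 : E) 1) :
      (Metric.ball 0 1).indicator H ((r : ℝ) • (o : E)) =
        (Set.Iio one).indicator (fun _ => H o) r := by
    have hr : ‖(r : ℝ) • (o : E)‖ = r := by
      rw [norm_smul, norm_eq_of_mem_sphere, mul_one, Real.norm_of_nonneg r.2.out.le]
    simp [Set.indicator, hr, hhom r r.2, ← Subtype.coe_lt_coe, one]
  calc ∫⁻ o : Metric.sphere (0 : E) 1, H o ∂μ.toSphere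
      = Module.finrank ℝ E * ((∫⁻ o : Metric.sphere (0 : E) 1, H o ∂μ.toSphere) *
          Measure.volumeIoiPow (Module.finrank ℝ E - 1) (Set.Iio one)) := by
        rw [mul_left_comm, hmass, mul_one]
    _ = Module.finrank ℝ E * ∫⁻ r, ∫⁻ o : Metric.sphere (0 : E) 1,
          (Metric.ball 0 1).indicator H ((r : ℝ) • (o : E)) ∂μ.toSphere
            ∂(Measure.volumeIoiPow (Module.finrank ℝ E - 1)) := by
        rw [← setLIntegral_const, ← lintegral_indicator measurableSet_Iio]
        congr! 3 with r
        simp only [hpolar]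
        by_cases hr : r ∈ Set.Iio one <;> simp [hr]
    _ = _ := by
        rw [← lintegral_indicator measurableSet_ball,
          lintegral_eq_lintegral_polar μ (hH.indicator measurableSet_ball)]

lemma setLIntegral_smul_set (s : Set E) (f : E → ℝ≥0∞) {t : ℝ} (ht : t ≠ 0) :
    ∫⁻ x in t • s, f x ∂μ =
      ENNReal.ofReal |t ^ Module.finrank ℝ E| * ∫⁻ x in s, f (t • x) ∂μ := by
  have hemb : MeasurableEmbedding (t • · : E → E) :=
    (Homeomorph.smulOfNeZero t ht).measurableEmbedding
  have hmap : Measure.map (t • ·) (μ.restrict s) =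
      ENNReal.ofReal |(t ^ Module.finrank ℝ E)⁻¹| • μ.restrict (t • s) := by
    rw [← Measure.restrict_smul, ← Measure.map_addHaar_smul μ ht, hemb.restrict_map,
      Set.preimage_smul₀ ht, inv_smul_smul₀ ht]
  rw [← hemb.lintegral_map, hmap, lintegral_smul_measure, smul_eq_mul, ← mul_assoc,
    ← ENNReal.ofReal_mul (abs_nonneg _), ← abs_mul, mul_inv_cancel₀ (pow_ne_zero _ ht)]
  simp

lemma setLIntegral_ball_eq {H : E → ℝ≥0∞} (hhom : ∀ t : ℝ, 0 < t → ∀ x, H (t • x) = H x) {R : ℝ}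
    (hR : 0 < R) :
    ∫⁻ x in Metric.ball 0 R, H x ∂μ =
      ENNReal.ofReal (R ^ Module.finrank ℝ E) * ∫⁻ x in Metric.ball 0 1, H x ∂μ := by
  simpa [smul_unitBall_of_pos hR, hhom R hR, abs_of_pos hR] using
    setLIntegral_smul_set μ (Metric.ball 0 1) H hR.ne'

end Polar

section CubeFaces

variable {d : ℕ}

lemma lintegral_eq_lintegral_insertNth (i : Fin (d + 1)) {f : Spc (d + 1) → ℝ≥0∞}
    (hf : Measurable f) :
    ∫⁻ x, f x = ∫⁻ t : ℝ, ∫⁻ y : Fin d → ℝ, f (WithLp.toLp 2 (i.insertNth t y)) := by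
  have hmeas : Measurable fun a : Fin (d + 1) → ℝ => f (WithLp.toLp 2 a) := hf.comp (by fun_prop)
  rw [← (PiLp.volume_preserving_toLp (Fin (d + 1))).lintegral_comp hf,
    ← (volume_preserving_piFinSuccAbove (fun _ => ℝ) i).symm.lintegral_comp hmeas]
  exact lintegral_prod _ (hmeas.comp
    (Continuous.finInsertNth i continuous_fst continuous_snd).measurable).aemeasurable

/-- The parametrization of the face `{x i = s}` of the cube `[-1, 1]^(d+1)`, where `s = ±1`, by
`[-1, 1]^d`. -/
def cubeFace (i : Fin (d + 1)) (s : ℝ) (y : Fin d → ℝ) : Spc (d + 1) :=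
  s • WithLp.toLp 2 (i.insertNth 1 y)

/-- The cone with vertex `0`, which is excluded, over the face `{x i = 1}` of `[-1, 1]^(d+1)`. -/
def faceCone (i : Fin (d + 1)) : Set (Spc (d + 1)) := {x | x i ∈ Set.Ioc 0 1 ∧ ∀ k, |x k| ≤ x i}

lemma measurableSet_faceCone (i : Fin (d + 1)) : MeasurableSet (faceCone i) := by
  unfold faceCone
  measurability

lemma faceCone_subset_ball (i : Fin (d + 1)) : faceCone i ⊆ Metric.ball 0 (d + 2) := by
  intro x hx
  have hcoord (k) : x k ^ 2 ≤ 1 := sq_le_one_iff_abs_le_one _ |>.2 ((hx.2 k).trans hx.1.2)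
  have hsq : ‖x‖ ^ 2 ≤ d + 1 := by
    rw [EuclideanSpace.real_norm_sq_eq]
    simpa using Finset.sum_le_sum fun k (_ : k ∈ Finset.univ) => hcoord k
  rw [mem_ball_zero_iff]
  nlinarith

lemma preimage_insertNth_faceCone (i : Fin (d + 1)) {t : ℝ} (ht : t ∈ Set.Ioc 0 1) :
    (fun y : Fin d → ℝ => (WithLp.toLp 2 (i.insertNth t y) : Spc (d + 1))) ⁻¹' faceCone i =
      t • Set.Icc (-1) 1 := by
  have hpos : 0 < t := ht.1
  ext y
  simp [faceCone, Fin.forall_iff_succAbove i, Set.mem_smul_set_iff_inv_smul_mem₀ hpos.ne', ht.1,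
    ht.2, hpos.le, abs_le, Pi.le_def, ← forall_and, inv_mul_le_iff₀, le_inv_mul_iff₀]

lemma lintegral_Ioc_ofReal_pow (d : ℕ) :
    (d + 1) * ∫⁻ t in Set.Ioc (0 : ℝ) 1, ENNReal.ofReal (t ^ d) = 1 := by
  have hint : IntegrableOn (fun t : ℝ => t ^ d) (Set.Ioc 0 1) :=
    (intervalIntegral.intervalIntegrable_pow (μ := volume) (a := 0) (b := 1) d).1
  have hnonneg : ∀ᵐ t ∂(volume.restrict (Set.Ioc (0 : ℝ) 1)), 0 ≤ t ^ d :=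
    ae_restrict_of_forall_mem measurableSet_Ioc fun t ht => pow_nonneg ht.1.le d
  rw [← ofReal_integral_eq_lintegral_ofReal hint hnonneg,
    ← intervalIntegral.integral_of_le zero_le_one, integral_pow, ← Nat.cast_succ,
    ← ENNReal.ofReal_natCast, ← ENNReal.ofReal_mul (by positivity)]
  have : (d : ℝ) + 1 ≠ 0 := by positivity
  simp [this]

lemma setLIntegral_faceCone (i : Fin (d + 1)) {H : Spc (d + 1) → ℝ≥0∞} (hH : Measurable H)
    (hhom : ∀ t : ℝ, 0 < t → ∀ x, H (t • x) = H x) :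
    (d + 1) * ∫⁻ x in faceCone i, H x = ∫⁻ y in Set.Icc (-1 : Fin d → ℝ) 1, H (cubeFace i 1 y) := by
  have hslice (t : ℝ) : ∫⁻ y : Fin d → ℝ, (faceCone i).indicator H (WithLp.toLp 2 (i.insertNth t y))
      = (Set.Ioc 0 1).indicator (fun t => ENNReal.ofReal (t ^ d) *
        ∫⁻ y in Set.Icc (-1 : Fin d → ℝ) 1, H (cubeFace i 1 y)) t := by
    by_cases ht : t ∈ Set.Ioc (0 : ℝ) 1
    · have hmem (y : Fin d → ℝ) : (faceCone i).indicator H (WithLp.toLp 2 (i.insertNth t y)) =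
          (t • Set.Icc (-1 : Fin d → ℝ) 1).indicator
            (fun y => H (WithLp.toLp 2 (i.insertNth t y))) y := by
        rw [← preimage_insertNth_faceCone i ht]
        rfl
      simp only [hmem, Set.indicator_of_mem ht]
      rw [lintegral_indicator (measurableSet_Icc.const_smul₀ t),
        setLIntegral_smul_set _ _ _ ht.1.ne', Module.finrank_fin_fun, abs_of_pos (pow_pos ht.1 d)]
      congr! 3 with y
      rw [← hhom t ht.1 (cubeFace i 1 y)]
      congr 1
      ext k
      refine i.succAboveCases ?_ (fun k => ?_) k <;> simp [cubeFace]
    · have hnot (y : Fin d → ℝ) : (WithLp.toLp 2 (i.insertNth t y) : Spc (d + 1)) ∉ faceCone i :=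
        fun hy => ht (by simpa using hy.1)
      simp [hnot, ht]
  rw [← lintegral_indicator (measurableSet_faceCone i), lintegral_eq_lintegral_insertNth i
    (hH.indicator (measurableSet_faceCone i))]
  simp only [hslice]
  rw [lintegral_indicator measurableSet_Ioc, lintegral_mul_const _ (by fun_prop), ← mul_assoc,
    lintegral_Ioc_ofReal_pow, one_mul]

lemma setLIntegral_smul_faceCone (i : Fin (d + 1)) {s : ℝ} (hs : |s| = 1)
    {H : Spc (d + 1) → ℝ≥0∞} (hH : Measurable H)
    (hhom : ∀ t : ℝ, 0 < t → ∀ x, H (t • x) = H x) :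
    (d + 1) * ∫⁻ x in s • faceCone i, H x =
      ∫⁻ y in Set.Icc (-1 : Fin d → ℝ) 1, H (cubeFace i s y) := by
  have hcone := setLIntegral_faceCone i (hH.comp (measurable_const_smul s)) fun t ht x => by
    rw [Function.comp_apply, Function.comp_apply, smul_comm, hhom t ht]
  have hs0 : s ≠ 0 := abs_pos.1 (hs ▸ one_pos)
  simp only [setLIntegral_smul_set _ _ _ hs0, abs_pow, hs, one_pow, ENNReal.ofReal_one, one_mul]
  simpa [cubeFace] using hcone

lemma lintegral_cubeFace_le (i : Fin (d + 1)) {s : ℝ} (hs : |s| = 1)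
    {H : Spc (d + 1) → ℝ≥0∞} (hH : Measurable H)
    (hhom : ∀ t : ℝ, 0 < t → ∀ x, H (t • x) = H x) :
    ∫⁻ y in Set.Icc (-1 : Fin d → ℝ) 1, H (cubeFace i s y) ≤
      (d + 2) ^ (d + 1) *
        ∫⁻ o : Metric.sphere (0 : Spc (d + 1)) 1, H o ∂(sphM (d + 1)) := by
  have hsub : s • faceCone i ⊆ Metric.ball 0 (d + 2) := by
    rintro _ ⟨x, hx, rfl⟩
    simpa [norm_smul, hs] using faceCone_subset_ball i hx
  calc _ = (d + 1) * ∫⁻ x in s • faceCone i, H x := (setLIntegral_smul_faceCone i hs hH hhom).symm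
    _ ≤ (d + 1) * ∫⁻ x in Metric.ball 0 (d + 2), H x := by gcongr
    _ = _ := by
      rw [setLIntegral_ball_eq _ hhom (by positivity), sphM, lintegral_toSphere_eq _ hH hhom,
        finrank_euclideanSpace_fin, ENNReal.ofReal_pow (by positivity), mul_left_comm]
      norm_cast

lemma unitBall_sdiff_zero_subset_iUnion_faceCone :
    Metric.ball 0 1 \ {0} ⊆ ⋃ i : Fin (d + 1), (1 : ℝ) • faceCone i ∪ (-1 : ℝ) • faceCone i := by
  rintro x ⟨hx, hx0⟩
  obtain ⟨i, hi⟩ := Finite.exists_max fun k => |x k|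
  have hxi : x i ≠ 0 := fun h => hx0 <| PiLp.ext fun k => by simpa [h] using hi k
  have hle : |x i| ≤ 1 := (PiLp.norm_apply_le x i).trans (mem_ball_zero_iff.1 hx).le
  refine Set.mem_iUnion.2 ⟨i, ?_⟩
  rcases hxi.lt_or_gt with hneg | hpos
  · rw [abs_of_neg hneg] at hi hle
    exact .inr ⟨-x, ⟨⟨neg_pos.2 hneg, hle⟩, by simpa using hi⟩, by simp⟩
  · rw [abs_of_pos hpos] at hi hle
    exact .inl ⟨x, ⟨⟨hpos, hle⟩, hi⟩, one_smul _ _⟩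

lemma lintegral_sphM_le_sum_cubeFace {H : Spc (d + 1) → ℝ≥0∞} (hH : Measurable H)
    (hhom : ∀ t : ℝ, 0 < t → ∀ x, H (t • x) = H x) :
    ∫⁻ o : Metric.sphere (0 : Spc (d + 1)) 1, H o ∂(sphM (d + 1)) ≤
      ∑ i : Fin (d + 1), ((∫⁻ y in Set.Icc (-1 : Fin d → ℝ) 1, H (cubeFace i 1 y)) +
        ∫⁻ y in Set.Icc (-1 : Fin d → ℝ) 1, H (cubeFace i (-1) y)) := by
  have hball : (Metric.ball 0 1 \ {0} : Set (Spc (d + 1))) =ᵐ[volume] Metric.ball 0 1 :=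
    sdiff_null_ae_eq_self (measure_singleton 0)
  calc _ = (d + 1) * ∫⁻ x in Metric.ball (0 : Spc (d + 1)) 1 \ {0}, H x := by
        rw [sphM, lintegral_toSphere_eq _ hH hhom, finrank_euclideanSpace_fin, Nat.cast_succ,
          setLIntegral_congr hball]
    _ ≤ (d + 1) * ∑ i : Fin (d + 1), ∫⁻ x in (1 : ℝ) • faceCone i ∪ (-1 : ℝ) • faceCone i, H x := by
        grw [unitBall_sdiff_zero_subset_iUnion_faceCone, lintegral_iUnion_le, tsum_fintype]
    _ ≤ (d + 1) * ∑ i : Fin (d + 1), ((∫⁻ x in (1 : ℝ) • faceCone i, H x) +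
          ∫⁻ x in (-1 : ℝ) • faceCone i, H x) := by
        gcongr with i
        exact lintegral_union_le _ _ _
    _ = _ := by
        simp_rw [Finset.mul_sum, mul_add, setLIntegral_smul_faceCone _ abs_one hH hhom,
          setLIntegral_smul_faceCone _ (abs_neg (1 : ℝ) ▸ abs_one) hH hhom]

end CubeFaces

section Normalize

variable {E : Type*} [NormedAddCommGroup E] [InnerProductSpace ℝ E] {x : E}

lemma hasFDerivAt_normalize (hx : x ≠ 0) :
    HasFDerivAt NormedSpace.normalize (‖x‖⁻¹ • (ℝ ∙ x)ᗮ.starProjection) x := by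
  have hnorm : HasFDerivAt (fun y : E => ‖y‖) (‖x‖⁻¹ • innerSL ℝ x) x := by
    have hsq := ((hasStrictFDerivAt_norm_sq x).hasFDerivAt.sqrt (by simpa using hx))
    simp only [Real.sqrt_sq (norm_nonneg _)] at hsq
    convert hsq using 1
    ext y
    simp only [smul_apply, coe_innerSL_apply, smul_eq_mul, one_div, mul_inv_rev, nsmul_eq_mul,
      Nat.cast_ofNat]
    ring
  refine (((hasDerivAt_inv (norm_ne_zero_iff.2 hx)).comp_hasFDerivAt x hnorm).smul
    (hasFDerivAt_id x)).congr_fderiv ?_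
  ext y
  rw [smul_apply, Submodule.starProjection_orthogonal_val, Submodule.starProjection_singleton]
  simp only [ringHom_apply, Function.comp_apply, id, smul_apply, add_apply, smul_eq_mul,
    ContinuousLinearMap.id_apply, ContinuousLinearMap.smulRight_apply, innerSL_apply_apply]
  match_scalars <;> field_simp

lemma inner_normalize_fderiv_normalize (hx : x ≠ 0) (z : E) :
    inner ℝ (NormedSpace.normalize x) (fderiv ℝ NormedSpace.normalize x z) = 0 := by
  have hmem := (ℝ ∙ x)ᗮ.starProjection_apply_mem z
  rw [Submodule.mem_orthogonal_singleton_iff_inner_right] at hmem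
  rw [(hasFDerivAt_normalize hx).fderiv, NormedSpace.normalize, smul_apply,
    inner_smul_left, inner_smul_right, hmem, mul_zero, mul_zero]

lemma norm_fderiv_normalize_le (hx : x ≠ 0) : ‖fderiv ℝ NormedSpace.normalize x‖ ≤ ‖x‖⁻¹ := by
  rw [(hasFDerivAt_normalize hx).fderiv, norm_smul, norm_inv, norm_norm]
  exact mul_le_of_le_one_right (by positivity) (Submodule.starProjection_norm_le _)

lemma contDiffAt_normalize {n : WithTop ℕ∞} (hx : x ≠ 0) :
    ContDiffAt ℝ n NormedSpace.normalize x :=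
  ((contDiffAt_norm ℝ hx).inv (norm_ne_zero_iff.2 hx)).smul contDiffAt_id

lemma measurable_normalize [MeasurableSpace E] [BorelSpace E] [SecondCountableTopology E] :
    Measurable (NormedSpace.normalize : E → E) :=
  measurable_norm.inv.smul measurable_id

end Normalize

section Rotations

variable {n : ℕ} {w : Spc n → ℝ}

/-- The rotation field `Ω_{jk} = x_j ∂_k - x_k ∂_j` on `ℝⁿ`. -/
noncomputable def rotDeriv (j k : Fin n) (w : Spc n → ℝ) (x : Spc n) : ℝ :=
  x j * fderiv ℝ w x (EuclideanSpace.single k 1) - x k * fderiv ℝ w x (EuclideanSpace.single j 1)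

/-- The density `∑_{|α| ≤ 1} |Ω^α w|`, with values in `ℝ≥0∞`. Each unordered pair `{j, k}` is
counted twice. -/
noncomputable def rotDensity (w : Spc n → ℝ) (x : Spc n) : ℝ≥0∞ :=
  ‖w x‖ₑ + ∑ j, ∑ k, ‖rotDeriv j k w x‖ₑ

lemma rotDeriv_swap (j k : Fin n) (w : Spc n → ℝ) : rotDeriv k j w = -rotDeriv j k w := by
  ext x
  simp [rotDeriv]

lemma rotDeriv_self (j : Fin n) (w : Spc n → ℝ) : rotDeriv j j w = 0 := by
  ext x
  simp [rotDeriv]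

lemma continuous_rotDeriv (hw : ContDiff ℝ 1 w) (j k : Fin n) : Continuous (rotDeriv j k w) := by
  have := hw.continuous_fderiv one_ne_zero
  unfold rotDeriv
  fun_prop

lemma measurable_rotDensity (hw : ContDiff ℝ 1 w) : Measurable (rotDensity w) :=
  hw.continuous.enorm.measurable.add <| Finset.measurable_fun_sum _ fun j _ =>
    Finset.measurable_fun_sum _ fun k _ => (continuous_rotDeriv hw j k).enorm.measurable

lemma rotDeriv_comp_smul (j k : Fin n) (w : Spc n → ℝ) (r : ℝ) (x : Spc n) :
    rotDeriv j k (fun x => w (r • x)) x = rotDeriv j k w (r • x) := by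
  simp only [rotDeriv, fderiv_comp_smul, smul_apply, PiLp.smul_apply, smul_eq_mul]
  ring

lemma rotDensity_comp_smul (w : Spc n → ℝ) (r : ℝ) (x : Spc n) :
    rotDensity (fun x => w (r • x)) x = rotDensity w (r • x) := by
  simp only [rotDensity, rotDeriv_comp_smul]

lemma rotDeriv_pow_succ {x : Spc n} (hw : DifferentiableAt ℝ w x) (m : ℕ) (j k : Fin n) :
    rotDeriv j k (fun x => w x ^ (m + 1)) x = (m + 1) * w x ^ m * rotDeriv j k w x := by
  rw [rotDeriv, (hw.hasFDerivAt.pow (m + 1)).fderiv]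
  simp only [rotDeriv, Nat.add_sub_cancel, Nat.cast_succ, smul_apply, nsmul_eq_mul, smul_eq_mul]
  ring

lemma rotDensity_pow_succ_le {x : Spc n} (hw : DifferentiableAt ℝ w x) (m : ℕ) :
    rotDensity (fun x => w x ^ (m + 1)) x ≤ (m + 1) * (‖w x‖ₑ ^ m * rotDensity w x) := by
  have hcast : ‖(m + 1 : ℝ)‖ₑ = m + 1 := by
    rw [Real.enorm_of_nonneg (by positivity)]
    norm_cast
  calc rotDensity (fun x => w x ^ (m + 1)) x
      = ‖w x‖ₑ ^ m * ‖w x‖ₑ + (m + 1) * (‖w x‖ₑ ^ m * ∑ j, ∑ k, ‖rotDeriv j k w x‖ₑ) := by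
        simp only [rotDensity, rotDeriv_pow_succ hw, enorm_mul, enorm_pow, hcast, ← Finset.mul_sum,
          mul_assoc, pow_succ (‖w x‖ₑ)]
    _ ≤ (m + 1) * (‖w x‖ₑ ^ m * ‖w x‖ₑ) +
          (m + 1) * (‖w x‖ₑ ^ m * ∑ j, ∑ k, ‖rotDeriv j k w x‖ₑ) :=
        add_le_add (le_mul_of_one_le_left zero_le le_add_self) le_rfl
    _ = _ := by rw [rotDensity]; ring

lemma enorm_clm_apply_le_of_inner_eq_zero (L : Spc n →L[ℝ] ℝ) {x τ : Spc n} (hx : ‖x‖ = 1)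
    (hτ : ‖τ‖ ≤ 1) (hxτ : inner ℝ x τ = 0) :
    ‖L τ‖ₑ ≤ ∑ j, ∑ k, ‖x j * L (EuclideanSpace.single k 1) -
      x k * L (EuclideanSpace.single j 1)‖ₑ := by
  have hL (z : Spc n) : L z = ∑ k, z k * L (EuclideanSpace.single k 1) := by
    conv_lhs => rw [← (EuclideanSpace.basisFun (Fin n) ℝ).sum_repr z]
    simp [map_sum]
  have hxx : ∑ j, x j * x j = 1 := by
    simpa [pow_two, hx] using (EuclideanSpace.real_norm_sq_eq x).symm
  have hτx : ∑ k, τ k * x k = 0 := by simpa [PiLp.inner_apply] using hxτ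
  have hsum : L τ = ∑ j, ∑ k, (x j * τ k) *
      (x j * L (EuclideanSpace.single k 1) - x k * L (EuclideanSpace.single j 1)) := by
    calc L τ = (∑ j, x j * x j) * L τ - (∑ j, x j * L (EuclideanSpace.single j 1)) *
          ∑ k, τ k * x k := by rw [hxx, hτx]; ring
      _ = _ := by
        rw [hL τ, Finset.sum_mul_sum, Finset.sum_mul_sum, ← Finset.sum_sub_distrib]
        simp only [← Finset.sum_sub_distrib]
        refine Finset.sum_congr rfl fun j _ => Finset.sum_congr rfl fun k _ => by ring
  have hcoeff (j k : Fin n) : ‖x j * τ k‖ₑ ≤ 1 := by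
    rw [← ofReal_norm, ENNReal.ofReal_le_one, norm_mul]
    exact mul_le_one₀ ((PiLp.norm_apply_le x j).trans hx.le) (norm_nonneg _)
      ((PiLp.norm_apply_le τ k).trans hτ)
  rw [hsum]
  refine (enorm_sum_le _ _).trans (Finset.sum_le_sum fun j _ => ?_)
  refine (enorm_sum_le _ _).trans (Finset.sum_le_sum fun k _ => ?_)
  rw [enorm_mul]
  exact mul_le_of_le_one_left zero_le (hcoeff j k)

end Rotations

section SphereSobolev

variable {d : ℕ} {w : Spc (d + 1) → ℝ} {p : ℝ}

/-- The linear part of the affine map `cubeFace i s`. -/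
noncomputable def cubeFaceLinear (i : Fin (d + 1)) (s : ℝ) : (Fin d → ℝ) →L[ℝ] Spc (d + 1) :=
  s • ∑ k, (ContinuousLinearMap.proj (R := ℝ) (φ := fun _ : Fin d => ℝ) k).smulRight
    (EuclideanSpace.single (i.succAbove k) 1)

lemma cubeFace_eq_single_add (i : Fin (d + 1)) (s : ℝ) (y : Fin d → ℝ) :
    cubeFace i s y = EuclideanSpace.single i s + cubeFaceLinear i s y := by
  ext j
  refine i.succAboveCases ?_ (fun k => ?_) j
  · simp [cubeFace, cubeFaceLinear, (Fin.succAbove_ne _ _).symm]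
  · simp [cubeFace, cubeFaceLinear, Fin.succAbove_ne, Pi.single_apply, Finset.sum_apply]

lemma contDiff_cubeFace (i : Fin (d + 1)) (s : ℝ) : ContDiff ℝ 1 (cubeFace i s) := by
  rw [funext (cubeFace_eq_single_add i s)]
  fun_prop

lemma fderiv_cubeFace (i : Fin (d + 1)) (s : ℝ) (y : Fin d → ℝ) :
    fderiv ℝ (cubeFace i s) y = cubeFaceLinear i s := by
  rw [funext (cubeFace_eq_single_add i s), fderiv_const_add, ContinuousLinearMap.fderiv]

lemma cubeFaceLinear_single (i : Fin (d + 1)) (s : ℝ) (k : Fin d) :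
    cubeFaceLinear i s (Pi.single k 1) = s • EuclideanSpace.single (i.succAbove k) 1 := by
  simp [cubeFaceLinear, Pi.single_apply]

lemma abs_le_norm_cubeFace (i : Fin (d + 1)) (s : ℝ) (y : Fin d → ℝ) : |s| ≤ ‖cubeFace i s y‖ := by
  simpa [cubeFace] using PiLp.norm_apply_le (cubeFace i s y) i

lemma enorm_fderiv_comp_normalize_le {n : ℕ} {w : Spc n → ℝ} (hw : ContDiff ℝ 1 w) {x z : Spc n}
    (hx : x ≠ 0) (hz : ‖z‖ ≤ ‖x‖) :
    ‖fderiv ℝ (w ∘ NormedSpace.normalize) x z‖ₑ ≤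
      ∑ j, ∑ k, ‖rotDeriv j k w (NormedSpace.normalize x)‖ₑ := by
  have hnormalize : DifferentiableAt ℝ NormedSpace.normalize x :=
    (contDiffAt_normalize hx).differentiableAt one_ne_zero
  have htangent : ‖fderiv ℝ NormedSpace.normalize x z‖ ≤ 1 :=
    calc _ ≤ ‖x‖⁻¹ * ‖x‖ :=
        (ContinuousLinearMap.le_of_opNorm_le _ (norm_fderiv_normalize_le hx) z).trans (by gcongr)
      _ = 1 := inv_mul_cancel₀ (norm_ne_zero_iff.2 hx)
  rw [fderiv_comp x (hw.differentiable one_ne_zero _) hnormalize, ContinuousLinearMap.comp_apply]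
  exact enorm_clm_apply_le_of_inner_eq_zero _ (NormedSpace.norm_normalize hx) htangent
    (inner_normalize_fderiv_normalize hx z)

lemma lintegral_cubeFace_enorm_rpow_le (hw : ContDiff ℝ 1 w) (hp₀ : 0 ≤ p)
    (hp : (d - 1 : ℝ) * p ≤ 1) (i : Fin (d + 1)) {s : ℝ} (hs : |s| = 1) :
    ∫⁻ y in Set.Icc (-1) 1, ‖w (NormedSpace.normalize (cubeFace i s y))‖ₑ ^ (1 + p) ≤
      ((d + 2) ^ (d + 1) *
        ∫⁻ o : Metric.sphere (0 : Spc (d + 1)) 1, rotDensity w o ∂(sphM (d + 1))) ^ (1 + p) := by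
  have hone (y : Fin d → ℝ) : 1 ≤ ‖cubeFace i s y‖ := hs ▸ abs_le_norm_cubeFace i s y
  have hne (y : Fin d → ℝ) : cubeFace i s y ≠ 0 := norm_pos_iff.1 (one_pos.trans_le (hone y))
  set W : Spc (d + 1) → ℝ := w ∘ NormedSpace.normalize
  set G : Spc (d + 1) → ℝ≥0∞ := fun x => ∑ j, ∑ k, ‖rotDeriv j k w (NormedSpace.normalize x)‖ₑ
  have hWat (y) : ContDiffAt ℝ 1 W (cubeFace i s y) :=
    hw.contDiffAt.comp _ (contDiffAt_normalize (hne y))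
  have hW : ContDiff ℝ 1 (W ∘ cubeFace i s) :=
    contDiff_iff_contDiffAt.2 fun y => (hWat y).comp y (contDiff_cubeFace i s).contDiffAt
  have hG : Measurable (G ∘ cubeFace i s) := by
    refine Measurable.comp ?_ (contDiff_cubeFace i s).continuous.measurable
    exact Finset.measurable_fun_sum _ fun j _ => Finset.measurable_fun_sum _ fun k _ =>
      ((continuous_rotDeriv hw j k).measurable.comp measurable_normalize).enorm
  have hderiv (y) (k : Fin d) :
      ‖fderiv ℝ (W ∘ cubeFace i s) y (Pi.single k 1)‖ₑ ≤ (G ∘ cubeFace i s) y := by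
    rw [fderiv_comp y ((hWat y).differentiableAt one_ne_zero)
      ((contDiff_cubeFace i s).differentiable one_ne_zero y), fderiv_cubeFace]
    refine enorm_fderiv_comp_normalize_le hw (hne y) ?_
    simpa [cubeFaceLinear_single, norm_smul, hs] using hone y
  calc _ ≤ (∫⁻ y in Set.Icc (-1) 1,
          rotDensity w (NormedSpace.normalize (cubeFace i s y))) ^ (1 + p) :=
        lintegral_Icc_enorm_rpow_le hW hG hderiv (fun _ => by norm_num) hp₀ (by simpa)
    _ ≤ ((d + 2) ^ (d + 1) * ∫⁻ o : Metric.sphere (0 : Spc (d + 1)) 1,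
          rotDensity w (NormedSpace.normalize o.1) ∂(sphM (d + 1))) ^ (1 + p) := by
        gcongr
        refine lintegral_cubeFace_le i hs
          ((measurable_rotDensity hw).comp measurable_normalize) fun t ht x => ?_
        simp only [Function.comp_apply, NormedSpace.normalize_smul_of_pos ht]
    _ = _ := by simp [NormedSpace.normalize_eq_self_of_norm_eq_one]

theorem lintegral_sphM_enorm_rpow_le (hw : ContDiff ℝ 1 w) (hp₀ : 0 ≤ p)
    (hp : (d - 1 : ℝ) * p ≤ 1) :
    ∫⁻ o : Metric.sphere (0 : Spc (d + 1)) 1, ‖w o‖ₑ ^ (1 + p) ∂(sphM (d + 1)) ≤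
      2 * (d + 1) * ((d + 2) ^ (d + 1) *
        ∫⁻ o : Metric.sphere (0 : Spc (d + 1)) 1, rotDensity w o ∂(sphM (d + 1))) ^ (1 + p) := by
  have hface := lintegral_cubeFace_enorm_rpow_le hw hp₀ hp
  calc ∫⁻ o : Metric.sphere (0 : Spc (d + 1)) 1, ‖w o‖ₑ ^ (1 + p) ∂(sphM (d + 1))
      = ∫⁻ o : Metric.sphere (0 : Spc (d + 1)) 1,
          ‖w (NormedSpace.normalize o.1)‖ₑ ^ (1 + p) ∂(sphM (d + 1)) := by
        simp [NormedSpace.normalize_eq_self_of_norm_eq_one]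
    _ ≤ _ := lintegral_sphM_le_sum_cubeFace
        ((hw.continuous.measurable.comp measurable_normalize).enorm.pow_const _) fun t ht x => by
          simp only [Function.comp_apply, NormedSpace.normalize_smul_of_pos ht]
    _ ≤ ∑ _ : Fin (d + 1), _ :=
      Finset.sum_le_sum fun i _ => add_le_add (hface i abs_one) (hface i (by simp))
    _ = _ := by
      simp only [Finset.sum_const, Finset.card_fin, nsmul_eq_mul, Nat.cast_succ]
      ring

end SphereSobolev

section LTwo

variable {α : Type*} [MeasurableSpace α] {μ : Measure α}

lemma eLpNorm_two_sq {ε : Type*} [ENorm ε] (f : α → ε) :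
    eLpNorm f 2 μ ^ 2 = ∫⁻ x, ‖f x‖ₑ ^ 2 ∂μ := by
  simpa using eLpNorm_nnreal_pow_eq_lintegral (f := f) (μ := μ) (p := 2) two_ne_zero

lemma lintegral_mul_le_eLpNorm_two {f g : α → ℝ≥0∞} (hf : AEMeasurable f μ)
    (hg : AEMeasurable g μ) :
    ∫⁻ x, f x * g x ∂μ ≤ eLpNorm f 2 μ * eLpNorm g 2 μ := by
  simpa [eLpNorm_eq_lintegral_rpow_enorm_toReal] using
    ENNReal.lintegral_mul_le_Lp_mul_Lq μ Real.HolderConjugate.two_two hf hg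

end LTwo

lemma le_of_forall_sq_le_mul_iSup {ι : Sort*} {X : ι → ℝ≥0∞} {A : ℝ≥0∞} (hX : ⨆ i, X i ≠ ⊤)
    (hA : ∀ i, X i ^ 2 ≤ A * ⨆ i, X i) (i : ι) : X i ≤ A := by
  refine (le_iSup X i).trans ?_
  rcases eq_or_ne (⨆ i, X i) 0 with hzero | hzero
  · simp only [hzero, zero_le]
  rw [← ENNReal.mul_le_mul_iff_left hzero hX, ← sq, ENNReal.iSup_pow_of_ne_zero two_ne_zero]
  exact iSup_le hA

section SphereSobolevLTwo

variable {d : ℕ} {w : Spc (d + 1) → ℝ}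

/-- The constant in the embedding `W^{1,1}(S^d) ⊂ L²(S^d)`, for `d ≤ 2`, given by
`lintegral_sphM_enorm_rpow_le`. -/
def sphereSobolevConst (d : ℕ) : ℕ := 2 * (d + 1) * (d + 2) ^ (d + 1)

lemma eLpNorm_two_sphM_le (hd : d ≤ 2) (hw : ContDiff ℝ 1 w) :
    eLpNorm (fun o : Metric.sphere (0 : Spc (d + 1)) 1 => w o) 2 (sphM (d + 1)) ≤
      sphereSobolevConst d *
        ∫⁻ o : Metric.sphere (0 : Spc (d + 1)) 1, rotDensity w o ∂(sphM (d + 1)) := by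
  have hd' : (d : ℝ) ≤ 2 := by exact_mod_cast hd
  have hsobolev := lintegral_sphM_enorm_rpow_le hw zero_le_one (by linarith)
  simp only [one_add_one_eq_two, ENNReal.rpow_two] at hsobolev
  rw [← ENNReal.pow_le_pow_left_iff two_ne_zero, eLpNorm_two_sq]
  refine hsobolev.trans ?_
  rw [sphereSobolevConst]
  push_cast
  rw [mul_assoc (2 * ((d : ℝ≥0∞) + 1)), mul_pow (2 * ((d : ℝ≥0∞) + 1))]
  gcongr
  exact le_self_pow₀ (by norm_cast; omega) two_ne_zero

end SphereSobolevLTwo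

section SphereNorm

variable {d n : ℕ}

instance : IsFiniteMeasure (sphM n) := by
  unfold sphM
  infer_instance

/-- The norm of `f(rω)` in `L²(S^{n-1}, dS_ω)`. -/
noncomputable def sphereL2Norm (f : Spc n → ℝ≥0∞) (r : ℝ) : ℝ≥0∞ :=
  eLpNorm (fun o : Metric.sphere (0 : Spc n) 1 => f (r • (o : Spc n))) 2 (sphM n)

@[fun_prop]
lemma measurable_sphereL2Norm {f : Spc n → ℝ≥0∞} (hf : Measurable f) :
    Measurable (sphereL2Norm f) := by
  have hsmul : Measurable fun p : ℝ × Metric.sphere (0 : Spc n) 1 => p.1 • (p.2 : Spc n) := by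
    fun_prop
  unfold sphereL2Norm
  simp only [eLpNorm_eq_lintegral_rpow_enorm_toReal two_ne_zero ENNReal.ofNat_ne_top]
  exact ((hf.comp hsmul).enorm.pow_const _).lintegral_prod_right.pow_const _

lemma eLpNorm_sphereL2Norm {f : Spc (d + 1) → ℝ≥0∞} (hf : Measurable f) :
    eLpNorm (fun r : Set.Ioi (0 : ℝ) => sphereL2Norm f r) 2 (Measure.volumeIoiPow d) =
      eLpNorm f 2 volume := by
  refine (ENNReal.pow_right_strictMono two_ne_zero).injective ?_
  simp only [eLpNorm_two_sq, sphereL2Norm, enorm_eq_self]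
  rw [lintegral_eq_lintegral_polar volume (by fun_prop), finrank_euclideanSpace_fin]
  rfl

lemma lintegral_sphM_enorm_pow_three_mul_le (hd : d ≤ 2) {v : Spc (d + 1) → ℝ}
    (hv : ContDiff ℝ 1 v) {g : Spc (d + 1) → ℝ≥0∞} (hg : Measurable g) (r : ℝ) :
    ∫⁻ o : Metric.sphere (0 : Spc (d + 1)) 1,
        ‖v (r • (o : Spc (d + 1)))‖ₑ ^ 3 * g (r • (o : Spc (d + 1))) ∂(sphM (d + 1)) ≤
      3 * sphereSobolevConst d * sphereL2Norm (fun x => ‖v x‖ₑ ^ 2) r *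
        (sphereL2Norm g r * sphereL2Norm (rotDensity v) r) := by
  have hsmul : Measurable fun o : Metric.sphere (0 : Spc (d + 1)) 1 => r • (o : Spc (d + 1)) := by
    fun_prop
  have hvm : Measurable fun o : Metric.sphere (0 : Spc (d + 1)) 1 => ‖v (r • (o : Spc (d + 1)))‖ₑ :=
    hv.continuous.enorm.measurable.comp hsmul
  have hpoint (x : Spc (d + 1)) :
      rotDensity (fun x => v x ^ 3) x ≤ 3 * (‖v x‖ₑ ^ 2 * rotDensity v x) := by
    simpa [two_add_one_eq_three] using
      rotDensity_pow_succ_le (hv.differentiable one_ne_zero x) 2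
  have hdensity : ∫⁻ o : Metric.sphere (0 : Spc (d + 1)) 1,
      rotDensity (fun x => v (r • x) ^ 3) o ∂(sphM (d + 1)) ≤
        3 * (sphereL2Norm (fun x => ‖v x‖ₑ ^ 2) r * sphereL2Norm (rotDensity v) r) := by
    simp only [rotDensity_comp_smul (fun x => v x ^ 3)]
    refine (lintegral_mono fun o => hpoint _).trans ?_
    rw [lintegral_const_mul' _ _ ENNReal.ofNat_ne_top]
    gcongr
    exact lintegral_mul_le_eLpNorm_two (hvm.pow_const 2).aemeasurable
      ((measurable_rotDensity hv).comp hsmul).aemeasurable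
  calc _ ≤ eLpNorm (fun o : Metric.sphere (0 : Spc (d + 1)) 1 => v (r • (o : Spc (d + 1))) ^ 3) 2
          (sphM (d + 1)) * sphereL2Norm g r := by
        rw [← eLpNorm_enorm]
        simp only [enorm_pow]
        exact lintegral_mul_le_eLpNorm_two (hvm.pow_const 3).aemeasurable
          (hg.comp hsmul).aemeasurable
    _ ≤ sphereSobolevConst d *
          (3 * (sphereL2Norm (fun x => ‖v x‖ₑ ^ 2) r * sphereL2Norm (rotDensity v) r)) *
          sphereL2Norm g r := by
        gcongr
        refine (eLpNorm_two_sphM_le (w := fun x => v (r • x) ^ 3) hd (by fun_prop)).trans ?_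
        gcongr
    _ = _ := by ring

end SphereNorm

section Radial

variable {E F : Type*} [NormedAddCommGroup E] [NormedSpace ℝ E] [NormedAddCommGroup F]
  [NormedSpace ℝ F] [CompleteSpace F]

lemma enorm_smul_le_lintegral_Ioi_enorm_fderiv {u : E → F} (hu : ContDiff ℝ 1 u)
    (hsupp : HasCompactSupport u) {o : E} (ho : ‖o‖ = 1) (r : ℝ) :
    ‖u (r • o)‖ₑ ≤ ∫⁻ ρ in Set.Ioi r, ‖fderiv ℝ u (ρ • o)‖ₑ := by
  have ho₀ : o ≠ 0 := by
    rintro rfl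
    simp at ho
  have hderiv (ρ : ℝ) : deriv (fun ρ : ℝ => u (ρ • o)) ρ = fderiv ℝ u (ρ • o) o := by
    have hline : HasDerivAt (fun ρ : ℝ => ρ • o) o ρ := by
      simpa using (hasDerivAt_id ρ).smul_const o
    exact ((hu.differentiable one_ne_zero _).hasFDerivAt.comp_hasDerivAt ρ hline).deriv
  have hftc := HasCompactSupport.integral_Ioi_deriv_eq (f := fun ρ : ℝ => u (ρ • o))
    (by fun_prop) (hsupp.comp_isClosedEmbedding (isClosedEmbedding_smul_left ho₀)) r
  rw [← enorm_neg, ← hftc]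
  refine (enorm_integral_le_lintegral_enorm _).trans (lintegral_mono fun ρ => ?_)
  rw [hderiv]
  simpa [enorm_eq_nnnorm, ← NNReal.coe_le_coe, ho] using (fderiv ℝ u (ρ • o)).le_opNorm o

lemma enorm_pow_four_smul_le_lintegral_Ioi {v : E → ℝ} (hv : ContDiff ℝ 1 v)
    (hsupp : HasCompactSupport v) {o : E} (ho : ‖o‖ = 1) (r : ℝ) :
    ‖v (r • o)‖ₑ ^ 4 ≤
      ∫⁻ ρ in Set.Ioi r, 4 * (‖v (ρ • o)‖ₑ ^ 3 * ‖fderiv ℝ v (ρ • o)‖ₑ) := by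
  have hfour : HasCompactSupport fun x => v x ^ 4 := hsupp.comp_left (zero_pow four_ne_zero)
  have hderiv (x : E) : ‖fderiv ℝ (fun x => v x ^ 4) x‖ₑ = 4 * (‖v x‖ₑ ^ 3 * ‖fderiv ℝ v x‖ₑ) := by
    rw [fderiv_fun_pow 4 (hv.differentiable one_ne_zero x)]
    simp [enorm_smul, mul_assoc, Real.enorm_eq_ofReal]
  simpa only [hderiv, enorm_pow] using
    enorm_smul_le_lintegral_Ioi_enorm_fderiv (hv.pow 4) hfour ho r

lemma ofReal_pow_mul_setLIntegral_Ioi_le (d : ℕ) {r : ℝ} (hr : 0 ≤ r) {φ : ℝ → ℝ≥0∞}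
    (hφ : Measurable φ) :
    ENNReal.ofReal (r ^ d) * ∫⁻ ρ in Set.Ioi r, φ ρ ≤
      ∫⁻ ρ : Set.Ioi (0 : ℝ), φ ρ ∂(Measure.volumeIoiPow d) := by
  rw [Measure.volumeIoiPow, lintegral_withDensity_eq_lintegral_mul _ (by fun_prop) (by fun_prop),
    ← lintegral_const_mul _ hφ]
  calc ∫⁻ ρ in Set.Ioi r, ENNReal.ofReal (r ^ d) * φ ρ
      ≤ ∫⁻ ρ in Set.Ioi r, ENNReal.ofReal (ρ ^ d) * φ ρ := by
        refine setLIntegral_mono' measurableSet_Ioi fun ρ (hρ : r < ρ) => ?_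
        gcongr
    _ ≤ ∫⁻ ρ in Set.Ioi 0, ENNReal.ofReal (ρ ^ d) * φ ρ :=
        lintegral_mono_set (Set.Ioi_subset_Ioi hr)
    _ = _ := (lintegral_subtype_comap measurableSet_Ioi _).symm

end Radial

section TraceEstimate

variable {d : ℕ} {v : Spc (d + 1) → ℝ}

lemma lintegral_sphereL2Norm_mul_le {f g : Spc (d + 1) → ℝ≥0∞} (hf : Measurable f)
    (hg : Measurable g) :
    ∫⁻ r : Set.Ioi (0 : ℝ), sphereL2Norm f r * sphereL2Norm g r ∂(Measure.volumeIoiPow d) ≤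
      eLpNorm f 2 volume * eLpNorm g 2 volume := by
  rw [← eLpNorm_sphereL2Norm hf, ← eLpNorm_sphereL2Norm hg]
  exact lintegral_mul_le_eLpNorm_two (by fun_prop) (by fun_prop)

lemma sphereL2Norm_enorm_sq_sq_le (hd : d ≤ 2) (hv : ContDiff ℝ 1 v) (hsupp : HasCompactSupport v)
    (r : ℝ) :
    sphereL2Norm (fun x => ‖v x‖ₑ ^ 2) r ^ 2 ≤
      ∫⁻ ρ in Set.Ioi r, 12 * sphereSobolevConst d * sphereL2Norm (fun x => ‖v x‖ₑ ^ 2) ρ *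
        (sphereL2Norm (fun x => ‖fderiv ℝ v x‖ₑ) ρ * sphereL2Norm (rotDensity v) ρ) := by
  have hgrad : Measurable fun x => ‖fderiv ℝ v x‖ₑ :=
    (hv.continuous_fderiv one_ne_zero).enorm.measurable
  have hintegrand : Measurable fun x => 4 * (‖v x‖ₑ ^ 3 * ‖fderiv ℝ v x‖ₑ) :=
    ((hv.continuous.enorm.measurable.pow_const 3).mul hgrad).const_mul 4
  calc sphereL2Norm (fun x => ‖v x‖ₑ ^ 2) r ^ 2
      = ∫⁻ o : Metric.sphere (0 : Spc (d + 1)) 1, ‖v (r • (o : Spc (d + 1)))‖ₑ ^ 4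
          ∂(sphM (d + 1)) := by
        simp only [sphereL2Norm, eLpNorm_two_sq, enorm_eq_self, ← pow_mul]
    _ ≤ ∫⁻ o : Metric.sphere (0 : Spc (d + 1)) 1, (∫⁻ ρ in Set.Ioi r,
          4 * (‖v (ρ • (o : Spc (d + 1)))‖ₑ ^ 3 * ‖fderiv ℝ v (ρ • (o : Spc (d + 1)))‖ₑ))
          ∂(sphM (d + 1)) :=
        lintegral_mono fun o =>
          enorm_pow_four_smul_le_lintegral_Ioi hv hsupp (norm_eq_of_mem_sphere o) r
    _ = ∫⁻ ρ in Set.Ioi r, ∫⁻ o : Metric.sphere (0 : Spc (d + 1)) 1,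
          4 * (‖v (ρ • (o : Spc (d + 1)))‖ₑ ^ 3 * ‖fderiv ℝ v (ρ • (o : Spc (d + 1)))‖ₑ)
          ∂(sphM (d + 1)) := by
        refine lintegral_lintegral_swap (Measurable.aemeasurable ?_)
        exact hintegrand.comp (by fun_prop : Measurable
          fun q : Metric.sphere (0 : Spc (d + 1)) 1 × ℝ => q.2 • (q.1 : Spc (d + 1)))
    _ ≤ _ := by
        refine lintegral_mono fun ρ => ?_
        rw [lintegral_const_mul' _ _ ENNReal.ofNat_ne_top]
        grw [lintegral_sphM_enorm_pow_three_mul_le hd hv hgrad ρ]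
        exact le_of_eq (by ring)

/-- The square of the left-hand side of the trace inequality, with `n = d + 1`, namely
`r^d ‖v(rω)‖²_{L⁴(S^d)} = r^d ‖v(rω)²‖_{L²(S^d)}`. -/
noncomputable def sphereTraceSq (v : Spc (d + 1) → ℝ) (r : ℝ) : ℝ≥0∞ :=
  ENNReal.ofReal (r ^ d) * sphereL2Norm (fun x => ‖v x‖ₑ ^ 2) r

lemma sphereTraceSq_sq_le (hd : d ≤ 2) (hv : ContDiff ℝ 1 v) (hsupp : HasCompactSupport v)
    {r : ℝ} (hr : 0 < r) :
    sphereTraceSq v r ^ 2 ≤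
      12 * sphereSobolevConst d *
        (eLpNorm (fun x => ‖fderiv ℝ v x‖ₑ) 2 volume * eLpNorm (rotDensity v) 2 volume) *
        ⨆ ρ : Set.Ioi (0 : ℝ), sphereTraceSq v ρ := by
  set M := ⨆ ρ : Set.Ioi (0 : ℝ), sphereTraceSq v ρ
  have hgrad : Measurable fun x => ‖fderiv ℝ v x‖ₑ :=
    (hv.continuous_fderiv one_ne_zero).enorm.measurable
  have hrot := measurable_rotDensity hv
  have habsorb : ENNReal.ofReal (r ^ d) * sphereL2Norm (fun x => ‖v x‖ₑ ^ 2) r ^ 2 ≤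
      ∫⁻ ρ in Set.Ioi r, 12 * sphereSobolevConst d * M *
        (sphereL2Norm (fun x => ‖fderiv ℝ v x‖ₑ) ρ * sphereL2Norm (rotDensity v) ρ) := by
    refine (mul_le_mul_right (sphereL2Norm_enorm_sq_sq_le hd hv hsupp r) _).trans ?_
    rw [← lintegral_const_mul' _ _ ENNReal.ofReal_ne_top]
    refine setLIntegral_mono' measurableSet_Ioi fun ρ (hρ : r < ρ) => ?_
    have hsup : ENNReal.ofReal (r ^ d) * sphereL2Norm (fun x => ‖v x‖ₑ ^ 2) ρ ≤ M :=
      le_trans (by unfold sphereTraceSq; gcongr)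
        (le_iSup (fun ρ : Set.Ioi (0 : ℝ) => sphereTraceSq v ρ) ⟨ρ, hr.trans hρ⟩)
    rw [← mul_assoc (ENNReal.ofReal _), mul_left_comm (ENNReal.ofReal _)]
    gcongr
  calc sphereTraceSq v r ^ 2
      = ENNReal.ofReal (r ^ d) *
          (ENNReal.ofReal (r ^ d) * sphereL2Norm (fun x => ‖v x‖ₑ ^ 2) r ^ 2) := by
        rw [sphereTraceSq]
        ring
    _ ≤ ∫⁻ ρ : Set.Ioi (0 : ℝ), 12 * sphereSobolevConst d * M *
          (sphereL2Norm (fun x => ‖fderiv ℝ v x‖ₑ) ρ * sphereL2Norm (rotDensity v) ρ)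
          ∂(Measure.volumeIoiPow d) := by
        grw [habsorb]
        exact ofReal_pow_mul_setLIntegral_Ioi_le d hr.le (by fun_prop)
    _ ≤ 12 * sphereSobolevConst d * M *
          (eLpNorm (fun x => ‖fderiv ℝ v x‖ₑ) 2 volume * eLpNorm (rotDensity v) 2 volume) := by
        rw [lintegral_const_mul _ (by fun_prop)]
        gcongr
        exact lintegral_sphereL2Norm_mul_le hgrad hrot
    _ = _ := by ring

lemma iSup_sphereTraceSq_ne_top (hv : Continuous v) (hsupp : HasCompactSupport v) :
    ⨆ ρ : Set.Ioi (0 : ℝ), sphereTraceSq v ρ ≠ ⊤ := by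
  have hweighted : HasCompactSupport fun x => ‖x‖ ^ d * v x ^ 2 :=
    (hsupp.comp_left (g := (· ^ 2)) (zero_pow two_ne_zero)).mul_left
  obtain ⟨B, hB⟩ := hweighted.exists_bound_of_continuous (by fun_prop)
  refine ne_top_of_le_ne_top (ENNReal.mul_ne_top
    (ENNReal.rpow_ne_top_of_nonneg (y := (2 : ℝ≥0∞).toReal⁻¹) (by positivity)
      (measure_ne_top (sphM (d + 1)) Set.univ))
    (ENNReal.ofReal_ne_top (r := B))) (iSup_le fun ⟨ρ, (hρ : 0 < ρ)⟩ => ?_)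
  have hreal : sphereTraceSq v ρ = eLpNorm
      (ρ ^ d • fun o : Metric.sphere (0 : Spc (d + 1)) 1 => v (ρ • (o : Spc (d + 1))) ^ 2) 2
      (sphM (d + 1)) := by
    rw [eLpNorm_const_smul, Real.enorm_of_nonneg (by positivity), ← eLpNorm_enorm]
    simp only [sphereTraceSq, sphereL2Norm, enorm_pow]
  rw [hreal]
  refine eLpNorm_le_of_ae_bound (.of_forall fun o => ?_)
  simpa [norm_smul, abs_of_pos hρ] using hB (ρ • (o : Spc (d + 1)))

lemma sphereTraceSq_le (hd : d ≤ 2) (hv : ContDiff ℝ 1 v) (hsupp : HasCompactSupport v)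
    {r : ℝ} (hr : 0 < r) :
    sphereTraceSq v r ≤ 12 * sphereSobolevConst d *
      (eLpNorm (fun x => ‖fderiv ℝ v x‖ₑ) 2 volume * eLpNorm (rotDensity v) 2 volume) :=
  le_of_forall_sq_le_mul_iSup (X := fun ρ : Set.Ioi (0 : ℝ) => sphereTraceSq v ρ)
    (iSup_sphereTraceSq_ne_top hv.continuous hsupp)
    (fun ρ => sphereTraceSq_sq_le hd hv hsupp ρ.2) ⟨r, hr⟩

lemma ofReal_rpow_mul_sphN_eq (v : Spc (d + 1) → ℝ) {r : ℝ} (hr : 0 ≤ r) :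
    ENNReal.ofReal (r ^ ((((d + 1 : ℕ) : ℝ) - 1) / 2)) * sphN (d + 1) 4 v r =
      sphereTraceSq v r ^ (1 / 2 : ℝ) := by
  have hradius : ENNReal.ofReal (r ^ ((((d + 1 : ℕ) : ℝ) - 1) / 2)) =
      ENNReal.ofReal (r ^ d) ^ (1 / 2 : ℝ) := by
    rw [ENNReal.ofReal_rpow_of_nonneg (by positivity) (by norm_num), ← Real.rpow_natCast,
      ← Real.rpow_mul hr]
    congr 2
    push_cast
    ring
  have hsphere : sphN (d + 1) 4 v r = sphereL2Norm (fun x => ‖v x‖ₑ ^ 2) r ^ (1 / 2 : ℝ) := by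
    simp only [sphN, sphereL2Norm, eLpNorm_eq_lintegral_rpow_enorm_toReal two_ne_zero
      ENNReal.ofNat_ne_top, enorm_eq_self, ENNReal.toReal_ofNat, ← ENNReal.rpow_natCast,
      ← ENNReal.rpow_mul, enorm_eq_nnnorm]
    norm_num
  rw [sphereTraceSq, ENNReal.mul_rpow_of_nonneg _ _ (by norm_num), hradius, hsphere]

end TraceEstimate

section RotationNorm

lemma sum_sum_eq_two_nsmul_sum_sum_ite_lt {ι M : Type*} [Fintype ι] [LinearOrder ι]
    [AddCommMonoid M] {f : ι → ι → M} (hsymm : ∀ j k, f k j = f j k) (hdiag : ∀ j, f j j = 0) :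
    ∑ j, ∑ k, f j k = 2 • ∑ j, ∑ k, if j < k then f j k else 0 := by
  have hsplit (j k : ι) :
      f j k = (if j < k then f j k else 0) + if k < j then f k j else 0 := by
    rcases lt_trichotomy j k with hjk | rfl | hkj
    · simp [hjk, hjk.not_gt]
    · simp [hdiag]
    · simp [hkj, hkj.not_gt, hsymm k j]
  calc ∑ j, ∑ k, f j k
      = ∑ j, ∑ k, (if j < k then f j k else 0) + ∑ j, ∑ k, if k < j then f k j else 0 := by
        simp only [← Finset.sum_add_distrib, ← hsplit]
    _ = _ := by
        rw [Finset.sum_comm (f := fun j k => if k < j then f k j else 0), two_nsmul]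

variable {n : ℕ} {v : Spc n → ℝ}

lemma eLpNorm_rotDensity_le (hv : ContDiff ℝ 1 v) {p : ℝ≥0∞} (hp : 1 ≤ p) :
    eLpNorm (rotDensity v) p volume ≤
      2 * (eLpNorm v p volume +
        ∑ j, ∑ k, if j < k then eLpNorm (rotDeriv j k v) p volume else 0) := by
  have hrot (j k : Fin n) : AEStronglyMeasurable (fun x => ‖rotDeriv j k v x‖ₑ) volume :=
    (continuous_rotDeriv hv j k).enorm.aestronglyMeasurable
  have hsum (j : Fin n) : AEStronglyMeasurable (∑ k, fun x => ‖rotDeriv j k v x‖ₑ) volume :=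
    Finset.aestronglyMeasurable_sum _ fun k _ => hrot j k
  have hfun : rotDensity v = (fun x => ‖v x‖ₑ) + ∑ j, ∑ k, fun x => ‖rotDeriv j k v x‖ₑ := by
    ext x
    simp [rotDensity]
  calc eLpNorm (rotDensity v) p volume
      ≤ eLpNorm (fun x => ‖v x‖ₑ) p volume +
          ∑ j, ∑ k, eLpNorm (fun x => ‖rotDeriv j k v x‖ₑ) p volume := by
        rw [hfun]
        refine (eLpNorm_add_le hv.continuous.enorm.aestronglyMeasurable
          (Finset.aestronglyMeasurable_sum _ fun j _ => hsum j) hp).trans ?_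
        grw [eLpNorm_sum_le (fun j _ => hsum j) hp]
        gcongr with j
        exact eLpNorm_sum_le (fun k _ => hrot j k) hp
    _ = eLpNorm v p volume +
          2 * ∑ j, ∑ k, if j < k then eLpNorm (rotDeriv j k v) p volume else 0 := by
        simp only [eLpNorm_enorm]
        rw [sum_sum_eq_two_nsmul_sum_sum_ite_lt
          (fun j k => by rw [rotDeriv_swap j k, eLpNorm_neg])
          (fun j => by rw [rotDeriv_self, eLpNorm_zero]), two_nsmul, two_mul]
    _ ≤ _ := by
        rw [mul_add]
        gcongr
        exact le_mul_of_one_le_left' one_le_two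

end RotationNorm

theorem trace_inequality_rotations_general (n : ℕ) (hn₀ : 0 < n) (hn : n ≤ 3) :
    ∃ C > (0 : ℝ), ∀ v : Spc n → ℝ, ContDiff ℝ 1 v → HasCompactSupport v →
      ∀ r : ℝ, 0 < r →
        ENNReal.ofReal (r ^ (((n : ℝ) - 1) / 2)) * sphN n 4 v r ≤
          ENNReal.ofReal C * (eLpNorm (fun x : Spc n => ‖fderiv ℝ v x‖) 2 volume) ^ (1 / 2 : ℝ) *
            (eLpNorm v 2 volume + ∑ j, ∑ k,
              if j < k then eLpNorm (rotDeriv j k v) 2 volume else 0) ^ (1 / 2 : ℝ) := by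
  obtain ⟨d, rfl⟩ := Nat.exists_eq_add_one.mpr hn₀
  have hd : d ≤ 2 := by omega
  have hK : 0 < sphereSobolevConst d := by unfold sphereSobolevConst; positivity
  refine ⟨(24 * sphereSobolevConst d : ℝ) ^ (1 / 2 : ℝ), by positivity,
    fun v hv hsupp r hr => ?_⟩
  rw [ofReal_rpow_mul_sphN_eq v hr.le,
    ← ENNReal.ofReal_rpow_of_nonneg (by positivity) (by norm_num),
    ← ENNReal.mul_rpow_of_nonneg _ _ (by norm_num), ← ENNReal.mul_rpow_of_nonneg _ _ (by norm_num)]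
  gcongr
  have hconst : ENNReal.ofReal (24 * sphereSobolevConst d) = 12 * sphereSobolevConst d * 2 := by
    rw [ENNReal.ofReal_mul (by norm_num), ENNReal.ofReal_natCast, ENNReal.ofReal_ofNat]
    ring
  refine (sphereTraceSq_le hd hv hsupp hr).trans ?_
  grw [eLpNorm_rotDensity_le hv one_le_two, hconst]
  rw [eLpNorm_enorm, eLpNorm_norm]
  exact le_of_eq (by ring)

/-- The trace-type inequality with rotations (Lemma 3.4 (ii)). -/
theorem trace_inequality_rotations (n : ℕ) (hn : n = 2 ∨ n = 3) :
    ∃ C > (0 : ℝ), ∀ v : Spc n → ℝ, ContDiff ℝ ∞ v → HasCompactSupport v →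
      ∀ r : ℝ, 0 < r →
        ENNReal.ofReal (r ^ (((n : ℝ) - 1)/2)) * sphN n 4 v r ≤
          ENNReal.ofReal C * (eLpNorm (fun x : Spc n => ‖fderiv ℝ v x‖) 2 volume) ^ (1/2 : ℝ) *
            (eLpNorm v 2 volume + ∑ j : Fin n, ∑ k : Fin n,
              if j < k then
                eLpNorm (fun x : Spc n =>
                  x j * fderiv ℝ v x (EuclideanSpace.single k 1) -
                    x k * fderiv ℝ v x (EuclideanSpace.single j 1)) 2 volume
              else 0) ^ (1/2 : ℝ) := by
  obtain ⟨C, hC, hbound⟩ := trace_inequality_rotations_general n (by omega) (by omega)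
  exact ⟨C, hC, fun v hv => hbound v (hv.of_le (by norm_cast))⟩
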